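/- There exists a class of languages that is learnable by a set-driven, strongly monotone, behaviorally correct learner from informants but not learnable by any full-information explanatory learner from informants: [Inf Sd SMon Bc] \ [Inf G Ex] ≠ ∅. -/

import Mathlib

open Filter Classical

namespace InfBc

/-! ### Basic notions: r.e. sets, informants, learners -/

/-- The `e`-th recursively enumerable set (via an acceptable numbering of
partial computable functions, `W e = dom φ_e`). -/
def W (e : ℕ) : Set ℕ := {x | ((Denumerable.ofNat Nat.Partrec.Code e).eval x).Dom}

/-- A language is recursively enumerable. -/
def RE (L : Set ℕ) : Prop := ∃ e, W e = L

abbrev Datum := ℕ × Bool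
abbrev Seq := List Datum
abbrev Informant := ℕ → Datum
abbrev HypSeq := ℕ → Part ℕ
/-- Learners are partial functions; all input types are coded into `ℕ`. -/
abbrev Learner := ℕ →. ℕ
abbrev Restriction := HypSeq → Informant → Prop

/-- Positive information of an infinite sequence. -/
def posI (I : Informant) : Set ℕ := {x | ∃ n, I n = (x, true)}
/-- Negative information of an infinite sequence. -/
def negI (I : Informant) : Set ℕ := {x | ∃ n, I n = (x, false)}

/-- `I` is an informant for the language `L`. -/
def IsInformant (I : Informant) (L : Set ℕ) : Prop := posI I = L ∧ negI I = Lᶜ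

/-- `I` is an informant (for some language), i.e. `I ∈ Inf`. -/
def IsInf (I : Informant) : Prop := IsInformant I (posI I)

/-- `I` is a canonical informant. -/
def Canonical (I : Informant) : Prop := ∀ x, I x = (x, true) ∨ I x = (x, false)

/-- `I[n]`, the length-`n` initial segment of `I`. -/
def segment (I : Informant) (n : ℕ) : Seq := (List.range n).map I

/-- Positive information of a finite sequence. -/
def posS (σ : Seq) : Set ℕ := {x | (x, true) ∈ σ}
/-- Negative information of a finite sequence. -/
def negS (σ : Seq) : Set ℕ := {x | (x, false) ∈ σ}
/-- The content of a finite sequence, as a set. -/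
def contentS (σ : Seq) : Set Datum := {a | a ∈ σ}

/-! ### Interaction operators -/

abbrev InteractionOperator := Learner → Informant → HypSeq

/-- Full-information (Gold-style) interaction: `G(h,I)(i) = h(I[i])`. -/
def Gop : InteractionOperator := fun h I i => h (Encodable.encode (segment I i))

/-- Set-driven interaction: `Sd(h,I)(i) = h(content(I[i]))`. -/
def Sdop : InteractionOperator := fun h I i => h (Encodable.encode (segment I i).toFinset)

/-- The iterated evaluation of an iterative learner on a finite sequence:
start with the initial hypothesis `h(none)` and feed the data one by one. -/
def iterExtend (h : Learner) (σ : Seq) : Part ℕ :=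
  σ.foldl (fun pe a => pe.bind fun e => h (Encodable.encode (some (e, a))))
    (h (Encodable.encode (none : Option (ℕ × Datum))))

/-- Iterative interaction: `It(h,I)(i)` is obtained by feeding `I[i]` one datum
at a time, each time updating the previous hypothesis. -/
def Itop : InteractionOperator := fun h I i => iterExtend h (segment I i)

/-- An iterative learner is confluent if the order and multiplicity in which
the content is presented does not matter. -/
def ConfluentLearner (h : Learner) : Prop :=
  ∀ σ τ : Seq, contentS σ = contentS τ → iterExtend h σ = iterExtend h τ

/-- Confluently iterative interaction. -/
noncomputable def CflItop : InteractionOperator := fun h I i =>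
  if ConfluentLearner h then iterExtend h (segment I i) else Part.none

/-- `β ≼ β'`: every (partial computable) `β`-learner can be translated into a
`β'`-learner with the same hypothesis sequence on every informant. -/
def OpLe (β β' : InteractionOperator) : Prop :=
  ∀ h : Learner, Partrec h → ∃ h' : Learner, Partrec h' ∧
    ∀ I : Informant, IsInf I → ∀ n, β h I n = β' h' I n

/-! ### Learning restrictions -/

/-- The trivial restriction `T`. -/
def TT : Restriction := fun _ _ => True

/-- Explanatory identification. -/
def Ex : Restriction := fun p I =>
  ∃ q, W q = posI I ∧ ∀ᶠ n in atTop, p n = Part.some q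

/-- Behaviorally correct identification. -/
def Bc : Restriction := fun p I => ∀ᶠ n in atTop, ∃ e ∈ p n, W e = posI I

/-- Consistency of a hypothesis with a finite sequence of data. -/
def ConsH (e : ℕ) (σ : Seq) : Prop := posS σ ⊆ W e ∧ negS σ ∩ W e = ∅

/-- Consistency of a hypothesis sequence with an informant. -/
def Cons : Restriction := fun p I => ∀ n, ∃ e ∈ p n, ConsH e (segment I n)

/-- Strongly monotone. -/
def SMon : Restriction := fun p _ =>
  ∀ s t, s ≤ t → ∀ e ∈ p s, ∀ e' ∈ p t, W e ⊆ W e'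

/-- Dual strongly monotone. -/
def SMond : Restriction := fun p _ =>
  ∀ s t, s ≤ t → ∀ e ∈ p s, ∀ e' ∈ p t, W e' ⊆ W e

/-- Monotone. -/
def Mon : Restriction := fun p I =>
  ∀ s t, s ≤ t → ∀ e ∈ p s, ∀ e' ∈ p t, W e ∩ posI I ⊆ W e' ∩ posI I

/-- Dual monotone. -/
def Mond : Restriction := fun p I =>
  ∀ s t, s ≤ t → ∀ e ∈ p s, ∀ e' ∈ p t, (W e)ᶜ ∩ negI I ⊆ (W e')ᶜ ∩ negI I

/-- Weakly monotone. -/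
def WMon : Restriction := fun p I =>
  ∀ s t, s ≤ t → ∀ e ∈ p s, ConsH e (segment I t) → ∀ e' ∈ p t, W e ⊆ W e'

/-- Dual weakly monotone. -/
def WMond : Restriction := fun p I =>
  ∀ s t, s ≤ t → ∀ e ∈ p s, ConsH e (segment I t) → ∀ e' ∈ p t, W e' ⊆ W e

/-- Cautious. -/
def Caut : Restriction := fun p _ =>
  ∀ s t, s < t → ∀ e ∈ p s, ∀ e' ∈ p t, ¬ W e' ⊂ W e

/-- Target cautious. -/
def CautTar : Restriction := fun p I =>
  ∀ s, ∀ e ∈ p s, ¬ posI I ⊂ W e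

/-- Finitely cautious. -/
def CautFin : Restriction := fun p _ =>
  ∀ s t, s < t → ∀ e ∈ p s, ∀ e' ∈ p t, W e' ⊂ W e → (W e').Infinite

/-- Infinitely cautious. -/
def CautInf : Restriction := fun p _ =>
  ∀ s t, s < t → ∀ e ∈ p s, ∀ e' ∈ p t, W e' ⊂ W e → (W e').Finite

/-! ### Learnability -/

/-- The class of admissible learners: all partial computable learners. -/
def AllL : Learner → Prop := fun _ => True
/-- The class of admissible learners: total computable learners (`ℛ`). -/
def TotalL : Learner → Prop := fun h => ∀ x, (h x).Dom
/-- Admissible informants: all informants (`Inf`). -/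
def AllI : Informant → Prop := fun _ => True

/-- `h` learns `L` in the setting given by admissible informants `P`,
interaction operator `β` and local restriction `δ`. -/
def LearnsWith (P : Informant → Prop) (β : InteractionOperator) (δ : Restriction)
    (h : Learner) (L : Set ℕ) : Prop :=
  RE L ∧ ∀ I : Informant, P I → IsInformant I L → δ (β h I) I

/-- `[τ(α) C P β δ]`: the collection of all classes of languages learnable by
some learner in `C` that satisfies the global restriction `α` on all admissible
informants, under interaction operator `β` and local restriction `δ`. -/
def Learnable (α : Restriction) (C : Learner → Prop) (P : Informant → Prop)
    (β : InteractionOperator) (δ : Restriction) : Set (Set (Set ℕ)) :=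
  {𝓛 | ∃ h : Learner, Partrec h ∧ C h ∧
        (∀ I : Informant, IsInf I → P I → α (β h I) I) ∧
        ∀ L ∈ 𝓛, LearnsWith P β δ h L}

/-! ### Properties of restrictions -/

/-- A learning restriction is delayable if it is preserved under postponing
hypotheses along a non-decreasing unbounded function. -/
def Delayable (δ : Restriction) : Prop :=
  ∀ I I' : Informant, IsInf I → IsInf I' → Set.range I = Set.range I' →
    ∀ (p : HypSeq) (s : ℕ → ℕ), Monotone s → (∀ m, ∃ n, m ≤ s n) →
      δ p I → (∀ n, contentS (segment I (s n)) ⊆ contentS (segment I' n)) →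
      δ (fun n => p (s n)) I'

/-- A learning restriction is semantic if it is indifferent to replacing the
hypothesis sequence by a semantically equivalent one. -/
def Semantic (δ : Restriction) : Prop :=
  ∀ (p p' : HypSeq) (I : Informant), δ p I →
    (∀ i, (p i).Dom ↔ (p' i).Dom) →
    (∀ i, ∀ e ∈ p i, ∀ e' ∈ p' i, W e = W e') →
    δ p' I


/-! ### Helper material for the separation -/

open Nat.Partrec (Code)

/-- Uniformly r.e. families have computable index functions. -/
lemma index_fun (P : ℕ × ℕ → ℕ → Bool) (hP : Primrec₂ P) :
    ∃ g : ℕ → ℕ, Computable g ∧ ∀ n, W (g n) = {y | ∃ m, P (n, y) m = true} := by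
  have h1 : Partrec (fun a : ℕ × ℕ => Nat.rfind (fun m => Part.some (P a m))) :=
    Partrec.rfind (p := fun a m => Part.some (P a m)) hP.to_comp.partrec₂
  have h2 : Partrec (fun a : ℕ => Nat.rfind (fun m => Part.some (P (Nat.unpair a) m))) :=
    h1.comp Computable.unpair
  obtain ⟨c, hc⟩ := Code.exists_code.1 (Partrec.nat_iff.1 h2)
  refine ⟨fun n => Encodable.encode (Code.curry c n), ?_, ?_⟩
  · exact (Primrec.encode.comp
      (Code.primrec₂_curry.comp (Primrec.const c) Primrec.id)).to_comp
  · intro n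
    ext y
    simp only [W, Set.mem_ofPred_eq, Denumerable.ofNat_encode, Code.eval_curry, hc, Nat.unpair_pair]
    refine (Nat.rfind_dom (p := fun m => Part.some (P (n, y) m))).trans ?_
    constructor
    · rintro ⟨m, hm, -⟩
      exact ⟨m, by simpa using (Part.mem_some_iff.1 hm).symm⟩
    · rintro ⟨m, hm⟩
      exact ⟨m, by simp [hm], fun _ => trivial⟩

/-- Finite sets are coded by lists with the same elements. -/
lemma encode_finset (D : Finset Datum) :
    ∃ l : List Datum, Encodable.decode (Encodable.encode D) = some l ∧ ∀ a, a ∈ l ↔ a ∈ D := by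
  have h : ((Encodable.decode (α := List Datum) (Encodable.encode D)).map
      ((↑) : List Datum → Multiset Datum)) = some D.1 := Encodable.encodek D.1
  obtain ⟨l, hl, hD⟩ := Option.map_eq_some_iff.1 h
  refine ⟨l, hl, fun a => ?_⟩
  rw [← Finset.mem_val, ← hD, Multiset.mem_coe]

/-- The predicate behind the set-driven learner. -/
def PH (a : ℕ × ℕ) (m : ℕ) : Bool :=
  let x := ((Encodable.decode (α := List Datum) a.1).getD []).getD m.unpair.1 (0, false)
  x.2 && (x.1 == a.2 ||
    (Code.evaln m.unpair.2 (Denumerable.ofNat Code x.1.unpair.1) a.2).isSome)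

lemma PH_primrec : Primrec₂ PH := by
  have hx : Primrec (fun p : (ℕ × ℕ) × ℕ =>
      ((Encodable.decode (α := List Datum) p.1.1).getD []).getD p.2.unpair.1 (0, false)) :=
    (Primrec.list_getD _).comp
      (Primrec.option_getD.comp (Primrec.decode.comp (Primrec.fst.comp Primrec.fst))
        (Primrec.const []))
      (Primrec.fst.comp (Primrec.unpair.comp Primrec.snd))
  have hy : Primrec (fun p : (ℕ × ℕ) × ℕ => p.1.2) := Primrec.snd.comp Primrec.fst
  exact Primrec.and.comp (Primrec.snd.comp hx) (Primrec.or.comp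
    (Primrec.beq.comp (Primrec.fst.comp hx) hy)
    (Primrec.option_isSome.comp (Code.primrec_evaln.comp
      (((Primrec.snd.comp (Primrec.unpair.comp Primrec.snd)).pair
        ((Primrec.ofNat Code).comp (Primrec.fst.comp (Primrec.unpair.comp
          (Primrec.fst.comp hx))))).pair hy))))

lemma mem_W_iff (e y : ℕ) :
    y ∈ W e ↔ ∃ k, (Code.evaln k (Denumerable.ofNat Code e) y).isSome = true := by
  simp only [W, Set.mem_ofPred_eq, Part.dom_iff_mem, Code.evaln_complete, Option.isSome_iff_exists,
    Option.mem_def]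
  exact exists_comm

lemma PH_spec {n : ℕ} {l : List Datum} (hn : Encodable.decode n = some l) (y : ℕ) :
    (∃ m, PH (n, y) m = true) ↔
      ∃ x, (x, true) ∈ l ∧ (x = y ∨ y ∈ W x.unpair.1) := by
  constructor
  · rintro ⟨m, hm⟩
    simp only [PH, hn, Option.getD_some, Bool.and_eq_true, Bool.or_eq_true,
      beq_iff_eq] at hm
    obtain ⟨h1, h2⟩ := hm
    by_cases hlt : m.unpair.1 < l.length
    · rw [List.getD_eq_getElem _ _ hlt] at h1 h2
      refine ⟨l[m.unpair.1].1, ?_, h2.imp id fun h => (mem_W_iff _ _).2 ⟨_, h⟩⟩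
      rw [← h1]
      exact List.getElem_mem hlt
    · rw [List.getD_eq_default _ _ (not_lt.1 hlt)] at h1
      simp at h1
  · rintro ⟨x, hx, h⟩
    obtain ⟨i, hi, hix⟩ := List.mem_iff_getElem.1 hx
    have key : ∃ k, x = y ∨
        (Code.evaln k (Denumerable.ofNat Code x.unpair.1) y).isSome = true := by
      rcases h with h | h
      · exact ⟨0, Or.inl h⟩
      · obtain ⟨k, hk⟩ := (mem_W_iff _ _).1 h
        exact ⟨k, Or.inr hk⟩
    obtain ⟨k, hk⟩ := key
    refine ⟨Nat.pair i k, ?_⟩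
    simp only [PH, hn, Option.getD_some, Bool.and_eq_true, Bool.or_eq_true,
      beq_iff_eq, Nat.unpair_pair]
    rw [List.getD_eq_getElem _ _ hi, hix]
    exact ⟨rfl, hk⟩

/-- The separating class. -/
def SepClass : Set (Set ℕ) :=
  {L | ∃ e, ∃ F : Set ℕ, F.Finite ∧ L = W e ∪ F ∧ ∀ x ∈ L, x.unpair.1 = e}

lemma mem_segment (I : Informant) (n : ℕ) (a : Datum) :
    a ∈ segment I n ↔ ∃ i < n, I i = a := by
  simp [segment]

lemma RE_of_union (e : ℕ) (F : Set ℕ) (hF : F.Finite) (hh : ∀ x ∈ F, x.unpair.1 = e)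
    (g : ℕ → ℕ) (hg : ∀ n, W (g n) = {y | ∃ m, PH (n, y) m = true}) : RE (W e ∪ F) := by
  by_cases hne : F = ∅
  · exact ⟨e, by simp [hne]⟩
  obtain ⟨x0, hx0⟩ := Set.nonempty_iff_ne_empty.2 hne
  refine ⟨g (Encodable.encode (hF.toFinset.toList.map fun x => (x, true))), ?_⟩
  rw [hg]
  ext y
  rw [Set.mem_ofPred_eq, PH_spec (Encodable.encodek _)]
  constructor
  · rintro ⟨x, hx, h⟩
    have hxF : x ∈ F := by simpa using hx
    rcases h with rfl | h
    · exact Or.inr hxF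
    · rw [hh x hxF] at h
      exact Or.inl h
  · rintro (h | h)
    · exact ⟨x0, by simpa using hx0, Or.inr (by rw [hh x0 hx0]; exact h)⟩
    · exact ⟨y, by simpa using h, Or.inl rfl⟩

lemma SepClass_mem :
    SepClass ∈ Learnable TT AllL AllI Sdop (fun p I => SMon p I ∧ Bc p I) := by
  obtain ⟨g, hgc, hg⟩ := index_fun PH PH_primrec
  have hseg : ∀ I n, W (g (Encodable.encode (segment I n).toFinset)) =
      {y | ∃ x, (∃ i < n, I i = (x, true)) ∧ (x = y ∨ y ∈ W x.unpair.1)} := by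
    intro I n
    obtain ⟨l, hl, hm⟩ := encode_finset (segment I n).toFinset
    rw [hg]
    ext y
    rw [Set.mem_ofPred_eq, PH_spec hl]
    simp only [hm, List.mem_toFinset, mem_segment, Set.mem_ofPred_eq]
  refine ⟨fun n => Part.some (g n), hgc.partrec, trivial, fun _ _ _ => trivial, ?_⟩
  rintro L ⟨e, F, hF, hL, he⟩
  refine ⟨?_, ?_⟩
  · rw [hL]
    exact RE_of_union e F hF (fun x hx => he x (hL ▸ Or.inr hx)) g hg
  intro I _ hI
  refine ⟨?_, ?_⟩
  · intro s t hst a ha b hb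
    simp only [Sdop, Part.mem_some_iff] at ha hb
    subst ha hb
    rw [hseg, hseg]
    rintro y ⟨x, ⟨i, hi, hix⟩, h⟩
    exact ⟨x, ⟨i, lt_of_lt_of_le hi hst, hix⟩, h⟩
  · have hpos : posI I = L := hI.1
    have hsub : ∀ n, W (g (Encodable.encode (segment I n).toFinset)) ⊆ L := by
      intro n
      rw [hseg]
      rintro y ⟨x, ⟨i, hi, hix⟩, h⟩
      have hxL : x ∈ L := hpos ▸ ⟨i, hix⟩
      rcases h with rfl | h
      · exact hxL
      · rw [he x hxL] at h
        rw [hL]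
        exact Or.inl h
    have hone : ∀ x ∈ L, ∀ᶠ n in atTop, ∃ i < n, I i = (x, true) := by
      intro x hx
      rw [← hpos] at hx
      obtain ⟨i, hi⟩ := hx
      filter_upwards [eventually_gt_atTop i] with n hn
      exact ⟨i, hn, hi⟩
    have hFin : ∀ᶠ n in atTop, ∀ x ∈ F, ∃ i < n, I i = (x, true) := by
      rw [Filter.eventually_all_finite hF]
      exact fun x hx => hone x (hL ▸ Or.inr hx)
    have hW : ∀ᶠ n in atTop, W e ⊆ W (g (Encodable.encode (segment I n).toFinset)) := by
      by_cases hne : L = ∅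
      · refine Filter.Eventually.of_forall fun n y hy => ?_
        have : y ∈ L := hL ▸ Or.inl hy
        simp [hne] at this
      · obtain ⟨x0, hx0⟩ := Set.nonempty_iff_ne_empty.2 hne
        filter_upwards [hone x0 hx0] with n hn y hy
        rw [hseg]
        exact ⟨x0, hn, Or.inr (by rw [he x0 hx0]; exact hy)⟩
    filter_upwards [hFin, hW] with n h1 h2
    refine ⟨_, Part.mem_some _, ?_⟩
    rw [hpos]
    refine Set.Subset.antisymm (hsub n) ?_
    rw [hL]
    rintro y (hy | hy)
    · exact h2 hy
    · rw [hseg]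
      exact ⟨y, h1 y hy, Or.inl rfl⟩

/-- The canonical informant for the `e`-column part of the characteristic function `f`. -/
def canI (e : ℕ) (f : ℕ → Bool) : Informant := fun n => (n, n.unpair.1 == e && f n)

/-- The language described by `canI e f`. -/
def canL (e : ℕ) (f : ℕ → Bool) : Set ℕ := {n | n.unpair.1 = e ∧ f n = true}

lemma posI_canI (e f) : posI (canI e f) = canL e f := by
  ext x
  simp only [posI, canI, canL, Set.mem_ofPred_eq, Prod.mk.injEq]
  constructor
  · rintro ⟨n, rfl, h⟩
    simpa using h
  · intro h
    exact ⟨x, rfl, by simpa using h⟩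

lemma negI_canI (e f) : negI (canI e f) = (canL e f)ᶜ := by
  ext x
  simp only [negI, canI, canL, Set.mem_ofPred_eq, Prod.mk.injEq, Set.mem_compl_iff]
  constructor
  · rintro ⟨n, rfl, h⟩ ⟨h1, h2⟩
    simp [h1, h2] at h
  · intro h
    refine ⟨x, rfl, ?_⟩
    by_contra hc
    apply h
    simpa using hc

lemma canI_isInformant (e f) : IsInformant (canI e f) (canL e f) :=
  ⟨posI_canI e f, negI_canI e f⟩

/-- The characteristic function coded by a finite list. -/
def lf (τ : List Bool) : ℕ → Bool := fun n => τ.getD n false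

/-- The finite data sequence described by a finite list. -/
def sq (e : ℕ) (τ : List Bool) : Seq := segment (canI e (lf τ)) τ.length

lemma segment_congr (e : ℕ) (f f' : ℕ → Bool) (n : ℕ) (h : ∀ i < n, f i = f' i) :
    segment (canI e f) n = segment (canI e f') n := by
  apply List.map_congr_left
  intro i hi
  simp [canI, h i (List.mem_range.1 hi)]

lemma sq_primrec : Primrec₂ sq := by
  refine Primrec.list_map (Primrec.list_range.comp (Primrec.list_length.comp Primrec.snd))
    (Primrec.pair Primrec.snd (Primrec.and.comp
      (Primrec.beq.comp (Primrec.fst.comp (Primrec.unpair.comp Primrec.snd))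
        (Primrec.fst.comp Primrec.fst))
      ((Primrec.list_getD false).comp (Primrec.snd.comp Primrec.fst) Primrec.snd)))

abbrev Wit := (List Bool × List Bool) × ℕ

/-- Value of the learner with code `c` at a list within `k` steps. -/
def val (c : Code) (e : ℕ) (k : ℕ) (τ : List Bool) : Option ℕ :=
  Code.evaln k c (Encodable.encode (sq e τ))

/-- The witness shows a mind change. -/
def good (c : Code) (e : ℕ) (τ : List Bool) (w : Wit) : Bool :=
  ((val c e w.2 (τ ++ w.1.1)).isSome && (val c e w.2 (τ ++ w.1.1 ++ w.1.2)).isSome) &&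
    !decide (val c e w.2 (τ ++ w.1.1) = val c e w.2 (τ ++ w.1.1 ++ w.1.2))

/-- The witness tried at stage `m`. -/
def wit (m : ℕ) : Wit := (Encodable.decode (α := Wit) m.unpair.1).getD (([], []), 0)

/-- One stage of the construction. -/
def stepT (c : Code) (e : ℕ) (m : ℕ) (τ : List Bool) : List Bool :=
  bif good c e τ (wit m) then τ ++ (wit m).1.1 ++ (wit m).1.2 else τ

/-- The construction. -/
def stg (c : Code) (e : ℕ) (m : ℕ) : List Bool :=
  Nat.rec [] (fun m τ => stepT c e m τ) m

lemma wit_primrec : Primrec wit :=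
  Primrec.option_getD.comp (Primrec.decode.comp (Primrec.fst.comp Primrec.unpair))
    (Primrec.const _)

lemma stg_primrec (c : Code) : Primrec₂ (stg c) := by
  have hv : Primrec (fun p : (ℕ × ℕ) × List Bool => val c p.1.1 p.1.2 p.2) :=
    Code.primrec_evaln.comp (((Primrec.snd.comp Primrec.fst).pair (Primrec.const c)).pair
      (Primrec.encode.comp (sq_primrec.comp (Primrec.fst.comp Primrec.fst) Primrec.snd)))
  have hw : Primrec (fun p : ℕ × ℕ × List Bool => wit p.2.1) :=
    wit_primrec.comp (Primrec.fst.comp Primrec.snd)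
  have ha : Primrec (fun p : ℕ × ℕ × List Bool => p.2.2 ++ (wit p.2.1).1.1) :=
    Primrec.list_append.comp (Primrec.snd.comp Primrec.snd)
      (Primrec.fst.comp (Primrec.fst.comp hw))
  have hb : Primrec (fun p : ℕ × ℕ × List Bool =>
      p.2.2 ++ (wit p.2.1).1.1 ++ (wit p.2.1).1.2) :=
    Primrec.list_append.comp ha (Primrec.snd.comp (Primrec.fst.comp hw))
  have hva := hv.comp ((Primrec.fst.pair (Primrec.snd.comp hw)).pair ha)
  have hvb := hv.comp ((Primrec.fst.pair (Primrec.snd.comp hw)).pair hb)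
  have hgood : Primrec (fun p : ℕ × ℕ × List Bool => good c p.1 p.2.2 (wit p.2.1)) :=
    Primrec.and.comp (Primrec.and.comp (Primrec.option_isSome.comp hva)
      (Primrec.option_isSome.comp hvb)) (Primrec.not.comp (Primrec.eq.decide.comp hva hvb))
  have hstep : Primrec₂ (fun (e : ℕ) (p : ℕ × List Bool) => stepT c e p.1 p.2) :=
    Primrec.cond hgood hb (Primrec.snd.comp Primrec.snd)
  exact Primrec.nat_rec (Primrec.const []) hstep

lemma stg_succ (c e m) : stg c e (m + 1) = stepT c e m (stg c e m) := rfl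

lemma stg_prefix_succ (c e m) : stg c e m <+: stg c e (m + 1) := by
  rw [stg_succ, stepT]
  cases good c e (stg c e m) (wit m) with
  | false => simp
  | true => simp only [cond_true, List.append_assoc]; exact List.prefix_append _ _

lemma stg_prefix (c e) {m n} (h : m ≤ n) : stg c e m <+: stg c e n := by
  induction n, h using Nat.le_induction with
  | base => exact List.prefix_rfl
  | succ n _ ih => exact ih.trans (stg_prefix_succ c e n)

/-- Predicate enumerating the constructed set. -/
def PD (c : Code) (a : ℕ × ℕ) (m : ℕ) : Bool :=
  a.2.unpair.1 == a.1 && lf (stg c a.1 m) a.2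

lemma PD_primrec (c : Code) : Primrec₂ (PD c) := by
  refine Primrec.and.comp (Primrec.beq.comp
    (Primrec.fst.comp (Primrec.unpair.comp (Primrec.snd.comp Primrec.fst)))
    (Primrec.fst.comp Primrec.fst))
    ((Primrec.list_getD false).comp
      ((stg_primrec c).comp (Primrec.fst.comp Primrec.fst) Primrec.snd)
      (Primrec.snd.comp Primrec.fst))

lemma exists_self (c : Code) :
    ∃ e, W e = {y | y.unpair.1 = e ∧ ∃ m, lf (stg c e m) y = true} := by
  obtain ⟨g, hgc, hg⟩ := index_fun (PD c) (PD_primrec c)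
  obtain ⟨d, hd⟩ := Code.fixed_point (f := fun d => Denumerable.ofNat Code (g (Encodable.encode d)))
    ((Computable.ofNat Code).comp (hgc.comp Computable.encode))
  refine ⟨Encodable.encode d, ?_⟩
  have h1 : W (Encodable.encode d) = W (g (Encodable.encode d)) := by
    simp only [W, Denumerable.ofNat_encode, hd]
  rw [h1, hg]
  ext y
  simp [PD]

lemma lf_prefix {σ τ : List Bool} (h : σ <+: τ) {i : ℕ} (hi : i < σ.length) : lf σ i = lf τ i := by
  obtain ⟨ρ, rfl⟩ := h
  rw [lf, lf, List.getD_append _ _ _ _ hi]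

lemma lf_prefix_true {σ τ : List Bool} (h : σ <+: τ) {i : ℕ} (hi : lf σ i = true) :
    lf τ i = true := by
  by_cases hlt : i < σ.length
  · rw [← lf_prefix h hlt, hi]
  · rw [lf, List.getD_eq_default _ _ (not_lt.1 hlt)] at hi
    simp at hi

lemma canL_lf_finite (e τ) : (canL e (lf τ)).Finite := by
  refine (Set.finite_lt_nat τ.length).subset ?_
  rintro x ⟨-, hx⟩
  by_contra hlt
  rw [lf, List.getD_eq_default _ _ (not_lt.1 hlt)] at hx
  simp at hx

lemma sq_eq_segment {e : ℕ} {τ : List Bool} {f : ℕ → Bool} (h : ∀ i < τ.length, lf τ i = f i) :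
    sq e τ = segment (canI e f) τ.length := segment_congr _ _ _ _ h

lemma good_spec {c e τ w} (h : good c e τ w = true) :
    ∃ v1 v2, v1 ∈ c.eval (Encodable.encode (sq e (τ ++ w.1.1))) ∧
      v2 ∈ c.eval (Encodable.encode (sq e (τ ++ w.1.1 ++ w.1.2))) ∧ v1 ≠ v2 := by
  simp only [good, Bool.and_eq_true, Option.isSome_iff_exists, Bool.not_eq_true',
    decide_eq_false_iff_not] at h
  obtain ⟨⟨⟨v1, h1⟩, ⟨v2, h2⟩⟩, h3⟩ := h
  refine ⟨v1, v2, Code.evaln_sound h1, Code.evaln_sound h2, ?_⟩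
  rintro rfl
  exact h3 (h1.trans h2.symm)

lemma good_exists {c e τ ρ1 ρ2 v1 v2} (h1 : v1 ∈ c.eval (Encodable.encode (sq e (τ ++ ρ1))))
    (h2 : v2 ∈ c.eval (Encodable.encode (sq e (τ ++ ρ1 ++ ρ2)))) (hne : v1 ≠ v2) :
    ∃ k, good c e τ ((ρ1, ρ2), k) = true := by
  obtain ⟨k1, hk1⟩ := Code.evaln_complete.1 h1
  obtain ⟨k2, hk2⟩ := Code.evaln_complete.1 h2
  have a1 := Code.evaln_mono (le_max_left k1 k2) hk1
  have a2 := Code.evaln_mono (le_max_right k1 k2) hk2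
  refine ⟨max k1 k2, ?_⟩
  rw [Option.mem_def] at a1 a2
  simp [good, val, a1] at *
  simp [a2, hne]

/-- The learner cannot be stuck. -/
lemma not_stuck {h : Learner} {c : Code} (hc : c.eval = h) {e : ℕ}
    (τ : List Bool)
    (hlearn : ∀ ρ, Ex (Gop h (canI e (lf (τ ++ ρ)))) (canI e (lf (τ ++ ρ)))) :
    ∃ w, good c e τ w = true := by
  obtain ⟨q, hq, hev⟩ := hlearn []
  rw [List.append_nil] at hq hev
  obtain ⟨n, hn, hnτ⟩ := (hev.and (eventually_ge_atTop τ.length)).exists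
  set ρ1 := List.replicate (n - τ.length) false with hρ1
  have hlen1 : (τ ++ ρ1).length = n := by simp [hρ1]; omega
  have hlf1 : ∀ i, lf (τ ++ ρ1) i = lf τ i := by
    intro i
    by_cases hi : i < τ.length
    · exact (lf_prefix (List.prefix_append _ _) hi).symm
    · have : i ≥ τ.length := not_lt.1 hi
      simp only [lf, List.getD_append_right _ _ _ _ this, List.getD_eq_default _ _ this, hρ1]
      rw [List.getD_eq_getElem?_getD, List.getElem?_replicate]
      split_ifs <;> rfl
  have e1 : q ∈ c.eval (Encodable.encode (sq e (τ ++ ρ1))) := by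
    rw [sq_eq_segment (f := lf τ) (fun i _ => hlf1 i), hlen1, hc]
    have : Gop h (canI e (lf τ)) n = Part.some q := hn
    rw [Gop] at this
    rw [this]
    exact Part.mem_some q
  -- a fresh element
  set z := Nat.pair e n with hz
  have hzn : n ≤ z := Nat.right_le_pair e n
  set ρ2 := List.replicate (z - n) false ++ [true] with hρ2
  obtain ⟨q', hq', hev'⟩ := hlearn (ρ1 ++ ρ2)
  rw [← List.append_assoc] at hq' hev'
  set τ2 := τ ++ ρ1 ++ ρ2 with hτ2
  have hlen2 : τ2.length = z + 1 := by
    rw [hτ2, List.length_append, hlen1]; simp [hρ2]; omega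
  have hz2 : lf τ2 z = true := by
    have : (τ ++ ρ1).length ≤ z := by omega
    rw [hτ2, lf, List.getD_append_right _ _ _ _ this, hlen1, hρ2,
      List.getD_append_right _ _ _ _ (by simp)]
    simp
  have hz1 : lf τ z = false := by
    rw [lf, List.getD_eq_default _ _ (by omega)]
  have hqq : q ≠ q' := by
    rintro rfl
    rw [hq, posI_canI, posI_canI] at hq'
    have : z ∈ canL e (lf τ2) := ⟨by simp [hz], hz2⟩
    rw [← hq'] at this
    simp [canL, hz1] at this
  obtain ⟨n', hn', hnτ'⟩ := (hev'.and (eventually_ge_atTop τ2.length)).exists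
  set ρ3 := List.replicate (n' - τ2.length) false with hρ3
  have hlen3 : (τ2 ++ ρ3).length = n' := by simp [hρ3]; omega
  have hlf3 : ∀ i, lf (τ2 ++ ρ3) i = lf τ2 i := by
    intro i
    by_cases hi : i < τ2.length
    · exact (lf_prefix (List.prefix_append _ _) hi).symm
    · have : i ≥ τ2.length := not_lt.1 hi
      simp only [lf, List.getD_append_right _ _ _ _ this, List.getD_eq_default _ _ this, hρ3]
      rw [List.getD_eq_getElem?_getD, List.getElem?_replicate]
      split_ifs <;> rfl
  have e2 : q' ∈ c.eval (Encodable.encode (sq e (τ ++ ρ1 ++ (ρ2 ++ ρ3)))) := by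
    rw [← List.append_assoc, ← hτ2, sq_eq_segment (f := lf τ2) (fun i _ => hlf3 i), hlen3, hc]
    have : Gop h (canI e (lf τ2)) n' = Part.some q' := hn'
    rw [Gop] at this
    rw [this]
    exact Part.mem_some q'
  obtain ⟨k, hk⟩ := good_exists e1 e2 hqq
  exact ⟨_, hk⟩

lemma SepClass_not_mem : SepClass ∉ Learnable TT AllL AllI Gop Ex := by
  rintro ⟨h, hpr, -, -, hlearn⟩
  obtain ⟨c, hc⟩ := Code.exists_code.1 (Partrec.nat_iff.1 hpr)
  obtain ⟨e, he⟩ := exists_self c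
  have hEx : ∀ f, canL e f ∈ SepClass → Ex (Gop h (canI e f)) (canI e f) :=
    fun f hf => (hlearn _ hf).2 _ trivial (canI_isInformant e f)
  by_cases hinf : ∀ M, ∃ m ≥ M, good c e (stg c e m) (wit m) = true
  · set f : ℕ → Bool := fun y => decide (∃ m, lf (stg c e m) y = true) with hf
    have hWf : canL e f = W e := by
      rw [he]; ext y; simp [canL, hf]
    have hmem : canL e f ∈ SepClass :=
      ⟨e, ∅, Set.finite_empty, by simp [hWf], fun x hx => hx.1⟩
    obtain ⟨q, -, hev⟩ := hEx f hmem
    have hstg : ∀ m, ∀ i < (stg c e m).length, lf (stg c e m) i = f i := by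
      intro m i hi
      rw [Bool.eq_iff_iff]
      simp only [hf, decide_eq_true_eq]
      constructor
      · exact fun hh => ⟨m, hh⟩
      · rintro ⟨m', hm'⟩
        rcases le_total m m' with hle | hle
        · rw [lf_prefix (stg_prefix c e hle) hi, hm']
        · exact lf_prefix_true (stg_prefix c e hle) hm'
    have hgstep : ∀ m, good c e (stg c e m) (wit m) = true →
        stg c e (m + 1) = stg c e m ++ (wit m).1.1 ++ (wit m).1.2 := by
      intro m hm
      rw [stg_succ, stepT, hm, cond_true]
    have hgrow : ∀ m, good c e (stg c e m) (wit m) = true →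
        (stg c e m).length < (stg c e (m + 1)).length := by
      intro m hm
      rw [hgstep m hm]
      obtain ⟨v1, v2, h1, h2, hne⟩ := good_spec hm
      have : (wit m).1.2 ≠ [] := by
        intro hnil
        rw [hnil, List.append_nil] at h2
        exact hne (Part.mem_unique h1 h2)
      have := List.length_pos_iff.2 this
      simp only [List.length_append]
      omega
    have hlong : ∀ N, ∃ M, N ≤ (stg c e M).length := by
      intro N
      induction N with
      | zero => exact ⟨0, Nat.zero_le _⟩
      | succ N ih =>
        obtain ⟨M, hM⟩ := ih
        obtain ⟨m, hm, hg⟩ := hinf M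
        have h1 := (stg_prefix c e hm).length_le
        have h2 := hgrow m hg
        exact ⟨m + 1, by omega⟩
    obtain ⟨N, hN⟩ := eventually_atTop.1 hev
    obtain ⟨M, hM⟩ := hlong N
    obtain ⟨m, hm, hg⟩ := hinf M
    have hl := (stg_prefix c e hm).length_le
    obtain ⟨v1, v2, h1, h2, hne⟩ := good_spec hg
    have key : ∀ τ v, τ <+: stg c e (m + 1) → N ≤ τ.length →
        v ∈ c.eval (Encodable.encode (sq e τ)) → v = q := by
      intro τ v hτ hlen hv
      rw [sq_eq_segment (f := f), hc] at hv
      · have := hN _ hlen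
        rw [Gop] at this
        rw [this] at hv
        exact Part.mem_some_iff.1 hv
      · intro i hi
        rw [lf_prefix hτ hi]
        exact hstg _ _ (lt_of_lt_of_le hi hτ.length_le)
    have hs := hgstep m hg
    refine hne ((key _ v1 ?_ ?_ h1).trans (key _ v2 ?_ ?_ h2).symm)
    · rw [hs]; exact List.prefix_append _ _
    · rw [List.length_append]; omega
    · rw [hs]
    · rw [List.length_append, List.length_append]; omega
  · push Not at hinf
    obtain ⟨M, hM⟩ := hinf
    have hconst : ∀ m ≥ M, stg c e m = stg c e M := by
      intro m hm
      induction m, hm using Nat.le_induction with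
      | base => rfl
      | succ m hm ih =>
        have := hM m hm
        rw [ne_eq, Bool.not_eq_true] at this
        rw [stg_succ, stepT, this, cond_false, ih]
    have hWsub : W e ⊆ canL e (lf (stg c e M)) := by
      rw [he]
      rintro y ⟨hy, m, hm⟩
      refine ⟨hy, ?_⟩
      rcases le_total m M with hle | hle
      · exact lf_prefix_true (stg_prefix c e hle) hm
      · rw [← hconst m hle, hm]
    obtain ⟨w, hw⟩ := not_stuck (c := c) hc (e := e) (stg c e M) (fun ρ => by
      apply hEx
      refine ⟨e, _, canL_lf_finite e (stg c e M ++ ρ), ?_, fun x hx => hx.1⟩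
      rw [Set.union_eq_right.2]
      exact hWsub.trans fun x hx => ⟨hx.1, lf_prefix_true (List.prefix_append _ _) hx.2⟩)
    set m := Nat.pair (Encodable.encode w) M with hm
    have hmM : M ≤ m := Nat.right_le_pair _ _
    have hwit : wit m = w := by
      rw [wit, hm, Nat.unpair_pair, Encodable.encodek, Option.getD_some]
    have := hM m hmM
    rw [hwit, hconst m hmM] at this
    exact this hw

/-- `[Inf Sd SMon Bc] \ [Inf G Ex] ≠ ∅`. -/
theorem bc_ex_separation :
    (Learnable TT AllL AllI Sdop (fun p I => SMon p I ∧ Bc p I) \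
      Learnable TT AllL AllI Gop Ex).Nonempty := by
  exact ⟨SepClass, SepClass_mem, SepClass_not_mem⟩

end InfBc
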